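/- arXiv:2602.20606 — 2 statements merged into one kernel-verified Lean document; each statement's English description precedes it below -/
import Mathlib

section
/- Let Y be a Banach space and let (x_n)_{n∈ℕ} be a bounded sequence in Y. Let V : ℕ → (0,∞) be strictly increasing with lim_{N→∞} V(N) = ∞ and lim_{N→∞} ΔV(N)/V(N) = 0. Then for each integer k ≥ 1, lim_{N→∞} ‖𝔼(k+1)^V_{n≤N} x_n − (1/(V(N)·k!)) Σ_{n=1}^N ΔV(n)·(log(V(N)/V(n)))^k·x_n‖ = 0. -/
open Filter Finset MeasureTheory

/-- Discrete derivative: `Δg(n) = g(n) - g(n-1)` for `n ≥ 2`, and `Δg(1) = g(1)`. -/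
noncomputable def dd (g : ℕ → ℝ) (n : ℕ) : ℝ := if n = 1 then g 1 else g n - g (n - 1)

/-- Iterated discrete derivative `Δ^k`. -/
noncomputable def ddIter (f : ℕ → ℝ) : ℕ → ℕ → ℝ
  | 0 => f
  | k + 1 => dd (ddIter f k)

/-- `N`-th `W`-weighted average `𝔼^W_{n ≤ N} x_n`. -/
noncomputable def wavg {Y : Type*} [AddCommGroup Y] [Module ℝ Y]
    (W : ℕ → ℝ) (x : ℕ → Y) (N : ℕ) : Y :=
  (W N)⁻¹ • ∑ n ∈ Finset.Icc 1 N, dd W n • x n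

/-- `W`-weighted average over the interval `[M, N]`. -/
noncomputable def wavgI {Y : Type*} [AddCommGroup Y] [Module ℝ Y]
    (W : ℕ → ℝ) (x : ℕ → Y) (M N : ℕ) : Y :=
  (W N - W M)⁻¹ • ∑ n ∈ Finset.Icc M N, dd W n • x n

/-- Cesàro average over the interval `[M, N]`. -/
noncomputable def cesaroI {Y : Type*} [AddCommGroup Y] [Module ℝ Y]
    (x : ℕ → Y) (M N : ℕ) : Y :=
  ((N : ℝ) - (M : ℝ))⁻¹ • ∑ n ∈ Finset.Icc M N, x n

/-- Iterated `W`-weighted averages: `iterAvg W x k N = 𝔼(k)^W_{n ≤ N} x_n`,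
with the convention `iterAvg W x 0 = x`. -/
noncomputable def iterAvg {Y : Type*} [AddCommGroup Y] [Module ℝ Y]
    (W : ℕ → ℝ) (x : ℕ → Y) : ℕ → ℕ → Y
  | 0, N => x N
  | k + 1, N => (W N)⁻¹ • ∑ n ∈ Finset.Icc 1 N, dd W n • iterAvg W x k n

/-- The uniform `W`-weighted average of `x` equals `L`: `𝔼^W_unif x_n = L`. -/
def unifAvg {Y : Type*} [NormedAddCommGroup Y] [NormedSpace ℝ Y]
    (W : ℕ → ℝ) (x : ℕ → Y) (L : Y) : Prop :=
  ∀ ε > (0 : ℝ), ∃ K > (0 : ℝ), ∀ M N : ℕ, 1 ≤ M → M ≤ N → K ≤ W N - W M →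
    ‖wavgI W x M N - L‖ < ε

/-- `𝔼(∞)^W x_n = L`: `lim_{k → ∞} limsup_{N → ∞} ‖𝔼(k)^W_{n ≤ N}(x_n - L)‖ = 0`. -/
def iterInfty {Y : Type*} [NormedAddCommGroup Y] [NormedSpace ℝ Y]
    (W : ℕ → ℝ) (x : ℕ → Y) (L : Y) : Prop :=
  Tendsto (fun k => Filter.limsup (fun N => ‖iterAvg W (fun n => x n - L) (k + 1) N‖) atTop)
    atTop (nhds 0)

/-- Membership in the class `𝓕₁`. -/
def inF1 (f : ℕ → ℝ) : Prop :=
  Tendsto f atTop atTop ∧ Tendsto (fun n => dd f n) atTop (nhds 0) ∧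
    ∃ n₀ : ℕ, ∀ m n : ℕ, n₀ ≤ m → m ≤ n → dd f n ≤ dd f m

/-- `memF ℓ f` means `f ∈ 𝓕_{ℓ+1}`. -/
def memF : ℕ → (ℕ → ℝ) → Prop
  | 0, f => inF1 f
  | ℓ + 1, f => memF ℓ (dd f)

/-- Integer powers `T^m` of an invertible map `T` with inverse `e`. -/
def zpowIter {X : Type*} (T e : X → X) (m : ℤ) : X → X :=
  if 0 ≤ m then T^[m.toNat] else e^[(-m).toNat]

/-- `p(Δ)f(n)` for an integer polynomial `p`. -/
noncomputable def polyDD (p : Polynomial ℤ) (f : ℕ → ℝ) (n : ℕ) : ℝ :=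
  ∑ j ∈ Finset.range (p.natDegree + 1), (p.coeff j : ℝ) * ddIter f j n

/-- `E ⊆ ℕ = {1, 2, ...}` has positive upper Banach density. -/
def posUBD (E : Set ℕ) : Prop :=
  ∃ δ : ℝ, 0 < δ ∧ ∃ M N : ℕ → ℕ, (∀ j, 1 ≤ M j ∧ M j ≤ N j) ∧
    Tendsto (fun j => N j - M j) atTop atTop ∧
    ∀ j, δ * ((N j : ℝ) - (M j : ℝ)) ≤ (Nat.card ↥(E ∩ Set.Icc (M j) (N j)) : ℝ)

/-
Put `S k N = ∑_{n ≤ N} ΔV(n) log(V(N)/V(n))^k / k! • x n`, `d = log(V(N+1)/V(N))` and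
`r = ΔV(N+1)/V(N+1)`. Since `log(V(N+1)/V(n)) = d + log(V(N)/V(n))`, the binomial theorem gives
`S (k+1) (N+1) = ∑_{j ≤ k+1} d^j / j! • S (k+1-j) N`. As `V(N) exp d = V(N+1)`, this first yields
`‖S k N‖ ≤ C V(N)` by induction on `N`, with `C` a bound for `x` that does not depend on `k`. On
separating the terms `j = 0, 1`, it then shows that `S (k+1) (N+1) - S (k+1) N` differs from
`r • S k (N+1)` by at most `2 C r ΔV(N+1) = o(ΔV(N+1))`. The numerators `V(N) 𝔼(k+1)^V_{n≤N} x_n`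
satisfy the same recursion without error, so by the Stolz–Cesàro theorem and induction on `k` the
two sequences differ by `o(V(N))`.
-/

section Exponential

lemma add_pow_div_factorial {K : Type*} [Field K] [CharZero K] (a b : K) (k : ℕ) :
    (a + b) ^ k / k.factorial =
      ∑ j ∈ range (k + 1), a ^ j / j.factorial * (b ^ (k - j) / (k - j).factorial) := by
  rw [add_pow, sum_div]
  refine sum_congr rfl fun j hj => ?_
  have hk : (k.factorial : K) ≠ 0 := Nat.cast_ne_zero.2 k.factorial_ne_zero
  rw [Nat.cast_choose K (mem_range_succ_iff.1 hj)]
  field_simp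

lemma sum_range_pow_add_div_factorial_le {d : ℝ} (hd : 0 ≤ d) (i m : ℕ) :
    ∑ j ∈ range m, d ^ (j + i) / (j + i).factorial ≤
      Real.exp d - ∑ j ∈ range i, d ^ j / j.factorial := by
  have h := Real.sum_le_exp_of_nonneg hd (i + m)
  rw [sum_range_add] at h
  simp only [add_comm _ i]
  linarith

lemma norm_sum_range_pow_add_div_factorial_smul_le {Y : Type*} [SeminormedAddCommGroup Y]
    [NormedSpace ℝ Y] {d B : ℝ} (hd : 0 ≤ d) {y : ℕ → Y} (hy : ∀ j, ‖y j‖ ≤ B) (i m : ℕ) :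
    ‖∑ j ∈ range m, (d ^ (j + i) / (j + i).factorial) • y j‖ ≤
      (Real.exp d - ∑ j ∈ range i, d ^ j / j.factorial) * B := by
  have hB : 0 ≤ B := (norm_nonneg _).trans (hy 0)
  calc ‖∑ j ∈ range m, (d ^ (j + i) / (j + i).factorial) • y j‖
      ≤ ∑ j ∈ range m, d ^ (j + i) / (j + i).factorial * B := by
        refine norm_sum_le_of_le _ fun j _ => ?_
        rw [norm_smul, Real.norm_of_nonneg (by positivity)]
        gcongr
        exact hy j
    _ ≤ (Real.exp d - ∑ j ∈ range i, d ^ j / j.factorial) * B := by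
        rw [← sum_mul]
        gcongr
        exact sum_range_pow_add_div_factorial_le hd i m

end Exponential

section StolzCesaro

open Asymptotics

lemma isLittleO_of_isLittleO_sub_succ {E : Type*} [NormedAddCommGroup E] {u : ℕ → E} {g : ℕ → ℝ}
    {n₀ : ℕ} (hg : MonotoneOn g (Set.Ici n₀)) (hg_top : Tendsto g atTop atTop)
    (h : (fun n => u (n + 1) - u n) =o[atTop] fun n => g (n + 1) - g n) :
    u =o[atTop] g := by
  have hshift : Tendsto (fun n => g (n + n₀)) atTop atTop :=
    hg_top.comp (tendsto_add_atTop_nat n₀)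
  have hsum (n : ℕ) : ∑ i ∈ range n, (g (i + n₀ + 1) - g (i + n₀)) = g (n + n₀) - g n₀ := by
    simpa [add_right_comm] using sum_range_sub (fun i => g (i + n₀)) n
  have husum (n : ℕ) : ∑ i ∈ range n, (u (i + n₀ + 1) - u (i + n₀)) = u (n + n₀) - u n₀ := by
    simpa [add_right_comm] using sum_range_sub (fun i => u (i + n₀)) n
  have hnorm := tendsto_norm_atTop_atTop.comp hshift
  have hg_const : (fun _ => g n₀) =o[atTop] fun n => g (n + n₀) :=
    isLittleO_const_left.2 (.inr hnorm)
  have hu_const : (fun _ => u n₀) =o[atTop] fun n => g (n + n₀) :=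
    isLittleO_const_left.2 (.inr hnorm)
  have hincr : (fun n => u (n + n₀) - u n₀) =o[atTop] fun n => g (n + n₀) - g n₀ := by
    simpa only [Function.comp_apply, hsum, husum] using
      (h.comp_tendsto (tendsto_add_atTop_nat n₀)).sum_range
        (fun n => sub_nonneg.2 (hg (Nat.le_add_left _ n)
          ((Nat.le_add_left _ n).trans (Nat.le_succ _)) (Nat.le_succ _)))
        (by simpa only [Function.comp_apply, hsum, ← sub_eq_add_neg] using
          tendsto_atTop_add_const_right _ (-g n₀) hshift)
  have hu : (fun n => u (n + n₀)) =o[atTop] fun n => g (n + n₀) := by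
    simpa using (hincr.trans_isBigO ((isBigO_refl _ _).sub hg_const.isBigO)).add hu_const
  rw [← map_add_atTop_eq_nat n₀]
  exact isLittleO_map.2 hu

end StolzCesaro

lemma dd_succ (V : ℕ → ℝ) {N : ℕ} (hN : 1 ≤ N) : dd V (N + 1) = V (N + 1) - V N := by
  rw [dd, if_neg (by omega), Nat.add_sub_cancel]

/-- The sum `∑_{n ≤ N} ΔV(n) log(V(N)/V(n))^k / k! • x n`, which is `V(N)` times the asymptotic
form of the `(k+1)`-fold average of `x`. -/
noncomputable def logSum {Y : Type*} [AddCommGroup Y] [Module ℝ Y]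
    (V : ℕ → ℝ) (x : ℕ → Y) (k N : ℕ) : Y :=
  ∑ n ∈ Icc 1 N, (dd V n * (Real.log (V N / V n) ^ k / k.factorial)) • x n

section Algebra

variable {Y : Type*} [AddCommGroup Y] [Module ℝ Y] (V : ℕ → ℝ) (x : ℕ → Y)

lemma logSum_zero_succ (N : ℕ) :
    logSum V x 0 (N + 1) = logSum V x 0 N + dd V (N + 1) • x (N + 1) := by
  simp [logSum, sum_Icc_succ_top]

lemma logSum_succ_one (k : ℕ) : logSum V x (k + 1) 1 = 0 := by
  by_cases h : V 1 = 0 <;> simp [logSum, h]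

variable {V} in
lemma logSum_succ_succ (hV : ∀ n, 1 ≤ n → V n ≠ 0) (k N : ℕ) :
    logSum V x (k + 1) (N + 1) = ∑ j ∈ range (k + 2),
      (Real.log (V (N + 1) / V N) ^ j / j.factorial) • logSum V x (k + 1 - j) N := by
  have hlog {n : ℕ} (hn : n ∈ Icc 1 N) : Real.log (V (N + 1) / V n) =
      Real.log (V (N + 1) / V N) + Real.log (V N / V n) := by
    obtain ⟨h1n, hnN⟩ := mem_Icc.1 hn
    have hVN := hV N (h1n.trans hnN)
    rw [← Real.log_mul (div_ne_zero (hV _ (by omega)) hVN) (div_ne_zero hVN (hV n h1n)),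
      div_mul_div_cancel₀ hVN]
  have htop : Real.log (V (N + 1) / V (N + 1)) = 0 := by
    rw [div_self (hV _ (by omega)), Real.log_one]
  simp only [logSum, smul_sum, smul_smul]
  rw [sum_Icc_succ_top (by omega), htop, sum_comm]
  simp only [ne_eq, Nat.add_eq_zero_iff, one_ne_zero, and_false, not_false_eq_true, zero_pow,
    zero_div, mul_zero, zero_smul, add_zero]
  refine sum_congr rfl fun n hn => ?_
  rw [← sum_smul, hlog hn, add_pow_div_factorial, mul_sum]
  exact congrArg (· • x n) (sum_congr rfl fun j _ => mul_left_comm _ _ _)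

end Algebra

section Bounds

variable {Y : Type*} [SeminormedAddCommGroup Y] [NormedSpace ℝ Y] {x : ℕ → Y} {C : ℝ}
  {V : ℕ → ℝ} {N : ℕ}

lemma log_div_succ_nonneg (hpos : ∀ n, 1 ≤ n → 0 < V n) (hmono : MonotoneOn V (Set.Ici 1))
    (hN : 1 ≤ N) : 0 ≤ Real.log (V (N + 1) / V N) :=
  Real.log_nonneg ((one_le_div (hpos N hN)).2 (hmono hN (Nat.le_add_left 1 N) N.le_succ))

lemma exp_log_div_mul (hpos : ∀ n, 1 ≤ n → 0 < V n) (hN : 1 ≤ N) :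
    Real.exp (Real.log (V (N + 1) / V N)) * V N = V (N + 1) := by
  have hVN := hpos N hN
  rw [Real.exp_log (div_pos (hpos _ (by omega)) hVN), div_mul_cancel₀ _ hVN.ne']

lemma dd_succ_nonneg (hmono : MonotoneOn V (Set.Ici 1)) (hN : 1 ≤ N) :
    0 ≤ dd V (N + 1) := by
  rw [dd_succ V hN]
  exact sub_nonneg.2 (hmono hN (Nat.le_add_left 1 N) N.le_succ)

lemma norm_logSum_le (hx : ∀ n, ‖x n‖ ≤ C) (hpos : ∀ n, 1 ≤ n → 0 < V n)
    (hmono : MonotoneOn V (Set.Ici 1)) (k : ℕ) (hN : 1 ≤ N) : ‖logSum V x k N‖ ≤ C * V N := by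
  have hC : 0 ≤ C := (norm_nonneg _).trans (hx 0)
  induction N, hN using Nat.le_induction generalizing k with
  | base =>
    cases k with
    | zero => simpa [logSum, dd, norm_smul, abs_of_pos (hpos 1 le_rfl), mul_comm C] using
        mul_le_mul_of_nonneg_left (hx 1) (hpos 1 le_rfl).le
    | succ k =>
      rw [logSum_succ_one, norm_zero]
      exact mul_nonneg hC (hpos 1 le_rfl).le
  | succ N hN ih =>
    cases k with
    | zero =>
      calc ‖logSum V x 0 (N + 1)‖
          ≤ ‖logSum V x 0 N‖ + ‖dd V (N + 1) • x (N + 1)‖ := by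
            rw [logSum_zero_succ]
            exact norm_add_le _ _
        _ ≤ C * V N + dd V (N + 1) * C := by
            rw [norm_smul, Real.norm_of_nonneg (dd_succ_nonneg hmono hN)]
            gcongr
            · exact ih 0
            · exact dd_succ_nonneg hmono hN
            · exact hx _
        _ = C * V (N + 1) := by
            rw [dd_succ V hN]
            ring
    | succ k =>
      have h := norm_sum_range_pow_add_div_factorial_smul_le (log_div_succ_nonneg hpos hmono hN)
        (fun j => ih (k + 1 - j)) 0 (k + 2)
      rw [logSum_succ_succ x (fun n hn => (hpos n hn).ne')]
      simpa [mul_left_comm, exp_log_div_mul hpos hN] using h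

lemma norm_logSum_succ_sub_le (hx : ∀ n, ‖x n‖ ≤ C) (hpos : ∀ n, 1 ≤ n → 0 < V n)
    (hmono : MonotoneOn V (Set.Ici 1)) (k : ℕ) (hN : 1 ≤ N) :
    ‖logSum V x k (N + 1) - logSum V x k N‖ ≤ C * dd V (N + 1) := by
  cases k with
  | zero =>
    rw [logSum_zero_succ, add_sub_cancel_left, norm_smul,
      Real.norm_of_nonneg (dd_succ_nonneg hmono hN), mul_comm]
    exact mul_le_mul_of_nonneg_right (hx _) (dd_succ_nonneg hmono hN)
  | succ k =>
    set d := Real.log (V (N + 1) / V N) with hd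
    have hsplit : logSum V x (k + 1) (N + 1) - logSum V x (k + 1) N =
        ∑ j ∈ range (k + 1), (d ^ (j + 1) / (j + 1).factorial) • logSum V x (k - j) N := by
      rw [logSum_succ_succ x (fun n hn => (hpos n hn).ne'), sum_range_succ']
      simp [hd]
    calc ‖logSum V x (k + 1) (N + 1) - logSum V x (k + 1) N‖
        ≤ (Real.exp d - ∑ j ∈ range 1, d ^ j / j.factorial) * (C * V N) := by
          rw [hsplit]
          exact norm_sum_range_pow_add_div_factorial_smul_le (log_div_succ_nonneg hpos hmono hN)
            (fun j => norm_logSum_le hx hpos hmono (k - j) hN) 1 (k + 1)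
      _ = C * (Real.exp d * V N - V N) := by
          simp only [range_one, sum_singleton, pow_zero, Nat.factorial_zero, Nat.cast_one, div_one]
          ring
      _ = C * dd V (N + 1) := by rw [hd, exp_log_div_mul hpos hN, dd_succ V hN]

lemma norm_logSum_succ_sub_log_smul_le (hx : ∀ n, ‖x n‖ ≤ C) (hpos : ∀ n, 1 ≤ n → 0 < V n)
    (hmono : MonotoneOn V (Set.Ici 1)) (k : ℕ) (hN : 1 ≤ N) :
    ‖logSum V x (k + 1) (N + 1) - logSum V x (k + 1) N -
        Real.log (V (N + 1) / V N) • logSum V x k N‖ ≤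
      C * (dd V (N + 1) - Real.log (V (N + 1) / V N) * V N) := by
  set d := Real.log (V (N + 1) / V N) with hd
  have hsplit : logSum V x (k + 1) (N + 1) - logSum V x (k + 1) N - d • logSum V x k N =
      ∑ j ∈ range k, (d ^ (j + 2) / (j + 2).factorial) • logSum V x (k - (j + 1)) N := by
    rw [logSum_succ_succ x (fun n hn => (hpos n hn).ne'), sum_range_succ', sum_range_succ']
    simp only [zero_add, pow_one, pow_zero, Nat.factorial_one, Nat.factorial_zero, Nat.cast_one,
      div_one, one_smul, add_tsub_cancel_right, tsub_zero, Nat.add_sub_add_right]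
    abel
  calc ‖logSum V x (k + 1) (N + 1) - logSum V x (k + 1) N - d • logSum V x k N‖
      ≤ (Real.exp d - ∑ j ∈ range 2, d ^ j / j.factorial) * (C * V N) := by
        rw [hsplit]
        exact norm_sum_range_pow_add_div_factorial_smul_le (log_div_succ_nonneg hpos hmono hN)
          (fun j => norm_logSum_le hx hpos hmono (k - (j + 1)) hN) 2 k
    _ = C * (Real.exp d * V N - V N - d * V N) := by
        simp only [sum_range_succ, range_zero, sum_empty, zero_add, pow_zero, pow_one,
          Nat.factorial_zero, Nat.factorial_one, Nat.cast_one, div_one]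
        ring
    _ = C * (dd V (N + 1) - d * V N) := by rw [hd, exp_log_div_mul hpos hN, dd_succ V hN]

lemma dd_succ_div_le_log (hpos : ∀ n, 1 ≤ n → 0 < V n) (hN : 1 ≤ N) :
    dd V (N + 1) / V (N + 1) ≤ Real.log (V (N + 1) / V N) := by
  have hVN := hpos N hN
  have hVN' := hpos (N + 1) (by omega)
  have h := Real.one_sub_inv_le_log_of_pos (div_pos hVN' hVN)
  rwa [inv_div, one_sub_div hVN'.ne', ← dd_succ V hN] at h

lemma norm_logSum_succ_sub_smul_le (hx : ∀ n, ‖x n‖ ≤ C) (hpos : ∀ n, 1 ≤ n → 0 < V n)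
    (hmono : MonotoneOn V (Set.Ici 1)) (k : ℕ) (hN : 1 ≤ N) :
    ‖logSum V x (k + 1) (N + 1) - logSum V x (k + 1) N -
        (dd V (N + 1) / V (N + 1)) • logSum V x k (N + 1)‖ ≤
      2 * C * (dd V (N + 1) / V (N + 1) * dd V (N + 1)) := by
  set d := Real.log (V (N + 1) / V N)
  set r := dd V (N + 1) / V (N + 1)
  have hr0 : 0 ≤ r := div_nonneg (dd_succ_nonneg hmono hN) (hpos _ (by omega)).le
  have hrd : 0 ≤ d - r := sub_nonneg.2 (dd_succ_div_le_log hpos hN)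
  have hrV : r * V N = dd V (N + 1) - r * dd V (N + 1) := by
    have hVr : r * V (N + 1) = dd V (N + 1) := div_mul_cancel₀ _ (hpos _ (by omega)).ne'
    linear_combination hVr + r * dd_succ V hN
  have hlog := norm_logSum_succ_sub_log_smul_le hx hpos hmono k hN
  have hcoeff : ‖(d - r) • logSum V x k N‖ ≤ (d - r) * (C * V N) := by
    rw [norm_smul, Real.norm_of_nonneg hrd]
    gcongr
    exact norm_logSum_le hx hpos hmono k hN
  have hincr : ‖r • (logSum V x k (N + 1) - logSum V x k N)‖ ≤ r * (C * dd V (N + 1)) := by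
    rw [norm_smul, Real.norm_of_nonneg hr0]
    gcongr
    exact norm_logSum_succ_sub_le hx hpos hmono k hN
  calc ‖logSum V x (k + 1) (N + 1) - logSum V x (k + 1) N - r • logSum V x k (N + 1)‖
      = ‖logSum V x (k + 1) (N + 1) - logSum V x (k + 1) N - d • logSum V x k N +
          (d - r) • logSum V x k N - r • (logSum V x k (N + 1) - logSum V x k N)‖ := by
        congr 1
        module
    _ ≤ C * (dd V (N + 1) - d * V N) + (d - r) * (C * V N) + r * (C * dd V (N + 1)) :=
        (norm_sub_le _ _).trans (add_le_add (norm_add_le_of_le hlog hcoeff) hincr)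
    _ = 2 * C * (r * dd V (N + 1)) := by linear_combination -C * hrV

end Bounds

/-- The error of `logSum V x k N` as an approximation to `V(N) 𝔼(k+1)^V_{n ≤ N} x_n`, the numerator
of the iterated average; the asymptotic formula says that it is `o(V(N))`. -/
noncomputable def iterAvgError {Y : Type*} [AddCommGroup Y] [Module ℝ Y]
    (V : ℕ → ℝ) (x : ℕ → Y) (k N : ℕ) : Y :=
  ∑ n ∈ Icc 1 N, dd V n • iterAvg V x k n - logSum V x k N

section Error

open Asymptotics

lemma inv_smul_iterAvgError {Y : Type*} [AddCommGroup Y] [Module ℝ Y] (V : ℕ → ℝ) (x : ℕ → Y)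
    (k N : ℕ) :
    (V N)⁻¹ • iterAvgError V x k N = iterAvg V x (k + 1) N -
      (V N * (k.factorial : ℝ))⁻¹ • ∑ n ∈ Icc 1 N,
        (dd V n * Real.log (V N / V n) ^ k) • x n := by
  have hlogSum : logSum V x k N =
      (k.factorial : ℝ)⁻¹ • ∑ n ∈ Icc 1 N, (dd V n * Real.log (V N / V n) ^ k) • x n := by
    simp only [logSum, smul_sum, smul_smul, div_eq_inv_mul _ (k.factorial : ℝ), mul_left_comm]
  rw [iterAvgError, iterAvg, smul_sub, hlogSum, smul_smul, mul_inv]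

lemma iterAvgError_succ_sub {Y : Type*} [AddCommGroup Y] [Module ℝ Y] (V : ℕ → ℝ) (x : ℕ → Y)
    (k N : ℕ) :
    iterAvgError V x (k + 1) (N + 1) - iterAvgError V x (k + 1) N =
      (dd V (N + 1) / V (N + 1)) • iterAvgError V x k (N + 1) -
        (logSum V x (k + 1) (N + 1) - logSum V x (k + 1) N -
          (dd V (N + 1) / V (N + 1)) • logSum V x k (N + 1)) := by
  have hstep : dd V (N + 1) • iterAvg V x (k + 1) (N + 1) = (dd V (N + 1) / V (N + 1)) •
      ∑ n ∈ Icc 1 (N + 1), dd V n • iterAvg V x k n := by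
    rw [iterAvg, smul_smul, div_eq_mul_inv]
  simp only [iterAvgError]
  rw [sum_Icc_succ_top (by omega) (fun n => dd V n • iterAvg V x (k + 1) n), hstep, smul_sub]
  abel

variable {Y : Type*} [NormedAddCommGroup Y] [NormedSpace ℝ Y] {x : ℕ → Y} {C : ℝ} {V : ℕ → ℝ}

lemma isLittleO_logSum_succ_sub_smul (hx : ∀ n, ‖x n‖ ≤ C) (hpos : ∀ n, 1 ≤ n → 0 < V n)
    (hmono : MonotoneOn V (Set.Ici 1)) (hratio : Tendsto (fun N => dd V N / V N) atTop (nhds 0))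
    (k : ℕ) :
    (fun N => logSum V x (k + 1) (N + 1) - logSum V x (k + 1) N -
      (dd V (N + 1) / V (N + 1)) • logSum V x k (N + 1)) =o[atTop] fun N => dd V (N + 1) := by
  have hbound : (fun N => logSum V x (k + 1) (N + 1) - logSum V x (k + 1) N -
      (dd V (N + 1) / V (N + 1)) • logSum V x k (N + 1)) =O[atTop]
        fun N => dd V (N + 1) / V (N + 1) * dd V (N + 1) := by
    refine IsBigO.of_bound (2 * C) ?_
    filter_upwards [eventually_ge_atTop 1] with N hN
    have hdd := dd_succ_nonneg hmono hN
    rw [Real.norm_of_nonneg (mul_nonneg (div_nonneg hdd (hpos _ (by omega)).le) hdd)]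
    exact norm_logSum_succ_sub_smul_le hx hpos hmono k hN
  have hsmall := ((isLittleO_one_iff ℝ).2 (hratio.comp (tendsto_add_atTop_nat 1))).mul_isBigO
    (isBigO_refl (fun N => dd V (N + 1)) atTop)
  simp only [one_mul] at hsmall
  exact hbound.trans_isLittleO hsmall

lemma isLittleO_iterAvgError (hx : ∀ n, ‖x n‖ ≤ C) (hpos : ∀ n, 1 ≤ n → 0 < V n)
    (hmono : MonotoneOn V (Set.Ici 1)) (htop : Tendsto V atTop atTop)
    (hratio : Tendsto (fun N => dd V N / V N) atTop (nhds 0)) (k : ℕ) :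
    iterAvgError V x k =o[atTop] V := by
  induction k with
  | zero =>
    have hzero : iterAvgError V x 0 = 0 := by
      funext N
      simp [iterAvgError, logSum, iterAvg]
    rw [hzero]
    exact isLittleO_zero _ _
  | succ k ih =>
    have hprev : (fun N => (dd V (N + 1) / V (N + 1)) • iterAvgError V x k (N + 1)) =o[atTop]
        fun N => dd V (N + 1) := by
      refine ((isBigO_refl (fun N => dd V (N + 1) / V (N + 1)) atTop).smul_isLittleO
        (ih.comp_tendsto (tendsto_add_atTop_nat 1))).congr_right fun N => ?_
      rw [smul_eq_mul, Function.comp_apply, div_mul_cancel₀ _ (hpos _ (by omega)).ne']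
    have hincr := hprev.sub (isLittleO_logSum_succ_sub_smul hx hpos hmono hratio k)
    refine isLittleO_of_isLittleO_sub_succ hmono htop (hincr.congr' ?_ ?_)
    · exact .of_forall fun N => (iterAvgError_succ_sub V x k N).symm
    · filter_upwards [eventually_ge_atTop 1] with N hN
      exact dd_succ V hN

end Error

theorem stmt7_general {Y : Type*} [NormedAddCommGroup Y] [NormedSpace ℝ Y]
    (x : ℕ → Y) (hx : ∃ C : ℝ, ∀ n, ‖x n‖ ≤ C)
    (V : ℕ → ℝ)
    (hVpos : ∀ n : ℕ, 1 ≤ n → 0 < V n)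
    (hVmono : MonotoneOn V (Set.Ici 1))
    (hVtop : Tendsto V atTop atTop)
    (hV0 : Tendsto (fun N : ℕ => dd V N / V N) atTop (nhds 0))
    (k : ℕ) :
    Tendsto (fun N : ℕ =>
      ‖iterAvg V x (k + 1) N -
        (V N * (Nat.factorial k : ℝ))⁻¹ • ∑ n ∈ Finset.Icc 1 N,
          (dd V n * Real.log (V N / V n) ^ k) • x n‖) atTop (nhds 0) := by
  obtain ⟨C, hC⟩ := hx
  have herror := isLittleO_iterAvgError hC hVpos hVmono hVtop hV0 k
  refine herror.norm_norm.tendsto_div_nhds_zero.congr fun N => ?_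
  rw [← inv_smul_iterAvgError, norm_smul, norm_inv, div_eq_inv_mul]

/-- asymptotic formula for the iterated `V`-weighted averages:
`𝔼(k+1)^V_{n≤N} x_n = (1/(V(N)·k!)) Σ_{n=1}^N ΔV(n)·(log(V(N)/V(n)))^k·x_n + o(1)`. -/
theorem stmt7 {Y : Type*} [NormedAddCommGroup Y] [NormedSpace ℝ Y] [CompleteSpace Y]
    (x : ℕ → Y) (hx : ∃ C : ℝ, ∀ n, ‖x n‖ ≤ C)
    (V : ℕ → ℝ)
    (hVpos : ∀ n : ℕ, 1 ≤ n → 0 < V n)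
    (hVmono : ∀ m n : ℕ, 1 ≤ m → m < n → V m < V n)
    (hVtop : Tendsto V atTop atTop)
    (hV0 : Tendsto (fun N : ℕ => dd V N / V N) atTop (nhds 0))
    (k : ℕ) (hk : 1 ≤ k) :
    Tendsto (fun N : ℕ =>
      ‖iterAvg V x (k + 1) N -
        (V N * (Nat.factorial k : ℝ))⁻¹ • ∑ n ∈ Finset.Icc 1 N,
          (dd V n * Real.log (V N / V n) ^ k) • x n‖) atTop (nhds 0) :=
  have hstrict : StrictMonoOn V (Set.Ici 1) := fun m hm n _ hmn => hVmono m n hm hmn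
  stmt7_general x hx V hVpos hstrict.monotoneOn hVtop hV0 k
end

section
/- Let Y be a Banach space and let (x_n)_{n∈ℕ} be a bounded sequence in Y. Let V : ℕ → (0,∞) be strictly increasing with lim_{N→∞} V(N) = ∞ and lim_{N→∞} ΔV(N)/V(N) = 0. If limsup_{N→∞} ‖Σ_{n=1}^N (ΔV(n)/V(n))·x_n‖ < ∞, then 𝔼(∞)^V x_n = 0. -/
open Filter Finset MeasureTheory

/-!
Write `A` for the averaging operator `f ↦ 𝔼^V f` and `S` for the partial sums of
`e n = (ΔV(n)/V(n)) • x n`. Summation by parts gives `A x = (1 - A) S + A e`. Since `e → 0` and `A`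
preserves null sequences, it remains to see that `A ^ k (1 - A)` tends to zero in the sup norm.

For a contraction `A`, the binomial coefficients of `(1 + A) ^ k (1 - A)` are controlled by the
first absolute moment of a symmetric binomial law, so this operator has norm at most
`2 ^ (k + 1) / √(k + 1)`. For a general contraction this says nothing about `A ^ k (1 - A)`, but an
averaging operator also satisfies `2 ‖A f‖ ≤ ‖(1 + A) f‖`, which turns the bound into
`‖A ^ k (1 - A)‖ ≤ 2 / √(k + 1)`.
-/

section Binomial

theorem sum_range_choose_mul_sq_sub_two_mul (n : ℕ) :
    ∑ j ∈ range (n + 1), (n.choose j : ℝ) * (n - 2 * j) ^ 2 = 2 ^ n * (n : ℝ) := by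
  have variance_at_half := congrArg (Polynomial.eval (1 / 2 : ℝ)) (bernsteinPolynomial.variance ℝ n)
  simp only [bernsteinPolynomial, Polynomial.eval_finsetSum, nsmul_eq_mul, Polynomial.eval_mul,
    Polynomial.eval_pow, Polynomial.eval_sub, Polynomial.eval_natCast, Polynomial.eval_X,
    Polynomial.eval_one] at variance_at_half
  calc ∑ j ∈ range (n + 1), (n.choose j : ℝ) * (n - 2 * j) ^ 2
      = 4 * 2 ^ n * ∑ j ∈ range (n + 1),
          (n * (1 / 2) - j : ℝ) ^ 2 * (n.choose j * (1 / 2) ^ j * (1 - 1 / 2) ^ (n - j) : ℝ) := by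
        rw [mul_sum]
        refine sum_congr rfl fun j hj => ?_
        have half_pow : (2 : ℝ) ^ n * ((1 / 2) ^ j * (1 - 1 / 2) ^ (n - j)) = 1 := by
          rw [sub_half, ← pow_add, Nat.add_sub_cancel' (mem_range_succ_iff.1 hj), ← mul_pow]
          norm_num
        linear_combination (-(n.choose j : ℝ) * (n - 2 * j) ^ 2) * half_pow
    _ = 2 ^ n * (n : ℝ) := by
        rw [variance_at_half]
        ring

theorem sum_range_choose_mul_abs_sub_two_mul_le (n : ℕ) :
    ∑ j ∈ range (n + 1), (n.choose j : ℝ) * |(n : ℝ) - 2 * j| ≤ 2 ^ n * √n := by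
  refine le_of_sq_le_sq ?_ (by positivity)
  calc (∑ j ∈ range (n + 1), (n.choose j : ℝ) * |(n : ℝ) - 2 * j|) ^ 2
      ≤ (∑ j ∈ range (n + 1), (n.choose j : ℝ)) *
          ∑ j ∈ range (n + 1), (n.choose j : ℝ) * (n - 2 * j) ^ 2 :=
        sum_sq_le_sum_mul_sum_of_sq_le_mul _ (fun _ _ => by positivity) (fun _ _ => by positivity)
          fun j _ => by rw [mul_pow, sq_abs, sq, mul_assoc]
    _ = (2 ^ n * √n) ^ 2 := by
        rw [sum_range_choose_mul_sq_sub_two_mul, mul_pow, Real.sq_sqrt n.cast_nonneg,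
          ← Nat.cast_sum, Nat.sum_range_choose]
        push_cast
        ring

theorem succ_mul_one_add_pow_mul_one_sub {R : Type*} [Ring R] (a : R) (k : ℕ) :
    ((k + 1 : ℕ) : R) * ((1 + a) ^ k * (1 - a)) =
      ∑ j ∈ range (k + 2), (((k + 1).choose j * ((k + 1 : ℕ) - 2 * j) : ℤ) : R) * a ^ j := by
  have binomial (m : ℕ) : (1 + a) ^ m = ∑ j ∈ range (m + 1), (m.choose j : R) * a ^ j := by
    rw [add_comm, (Commute.one_right a).add_pow]
    simp only [one_pow, mul_one, Nat.cast_comm]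
  have derivative : ((k + 1 : ℕ) : R) * ((1 + a) ^ k * a) =
      ∑ j ∈ range (k + 2), (((k + 1).choose j * j : ℕ) : R) * a ^ j := by
    rw [sum_range_succ', binomial, sum_mul, mul_sum]
    simp only [mul_zero, Nat.cast_zero, zero_mul, add_zero]
    refine sum_congr rfl fun j _ => ?_
    rw [← Nat.add_one_mul_choose_eq, Nat.cast_mul, pow_succ]
    simp only [mul_assoc]
  calc ((k + 1 : ℕ) : R) * ((1 + a) ^ k * (1 - a))
      = ((k + 1 : ℕ) : R) * (1 + a) ^ (k + 1) -
          2 * (((k + 1 : ℕ) : R) * ((1 + a) ^ k * a)) := by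
        rw [pow_succ]
        noncomm_ring
    _ = ∑ j ∈ range (k + 2),
          (((k + 1).choose j * ((k + 1 : ℕ) - 2 * j) : ℤ) : R) * a ^ j := by
        rw [derivative, binomial, mul_sum, mul_sum, ← sum_sub_distrib]
        refine sum_congr rfl fun j _ => ?_
        rw [← mul_assoc, ← mul_assoc, ← sub_mul]
        have coeff : ((k + 1 : ℕ) * (k + 1).choose j - 2 * ((k + 1).choose j * j : ℕ) : ℤ) =
            (k + 1).choose j * ((k + 1 : ℕ) - 2 * j) := by
          push_cast
          ring
        rw [← coeff]
        push_cast
        rfl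

theorem succ_smul_one_add_pow_mul_one_sub_apply {E : Type*} [AddCommGroup E] [Module ℝ E]
    (T : Module.End ℝ E) (f : E) (k : ℕ) :
    ((k + 1 : ℕ) : ℝ) • ((1 + T) ^ k * (1 - T)) f = ∑ j ∈ range (k + 2),
      ((k + 1).choose j * ((k + 1 : ℕ) - 2 * j) : ℝ) • (T ^ j) f := by
  have h := congrArg (· f) (succ_mul_one_add_pow_mul_one_sub T k)
  simp only [Module.End.mul_apply, Module.End.natCast_apply, LinearMap.sum_apply,
    Module.End.intCast_apply] at h
  rw [Nat.cast_smul_eq_nsmul, Module.End.mul_apply, h]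
  refine sum_congr rfl fun j _ => ?_
  rw [← Int.cast_smul_eq_zsmul ℝ]
  push_cast
  rfl

theorem seminorm_one_add_pow_mul_one_sub_le {E : Type*} [AddCommGroup E] [Module ℝ E]
    (p : Seminorm ℝ E) (T : Module.End ℝ E) (f : E) {C : ℝ} (hC : ∀ j, p ((T ^ j) f) ≤ C) (k : ℕ) :
    p (((1 + T) ^ k * (1 - T)) f) ≤ 2 ^ (k + 1) / √(k + 1 : ℕ) * C := by
  have C_nonneg : 0 ≤ C := (apply_nonneg p _).trans (hC 0)
  have moment_bound : (k + 1 : ℕ) * p (((1 + T) ^ k * (1 - T)) f) ≤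
      2 ^ (k + 1) * √(k + 1 : ℕ) * C :=
    calc (k + 1 : ℕ) * p (((1 + T) ^ k * (1 - T)) f)
        = p (∑ j ∈ range (k + 2),
            ((k + 1).choose j * ((k + 1 : ℕ) - 2 * j) : ℝ) • (T ^ j) f) := by
          rw [← succ_smul_one_add_pow_mul_one_sub_apply, map_smul_eq_mul, Real.norm_natCast]
      _ ≤ ∑ j ∈ range (k + 2), p (((k + 1).choose j * ((k + 1 : ℕ) - 2 * j) : ℝ) • (T ^ j) f) :=
          le_sum_of_subadditive p (map_zero p).le (map_add_le_add p) _ _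
      _ ≤ ∑ j ∈ range (k + 2), ((k + 1).choose j * |((k + 1 : ℕ) : ℝ) - 2 * j|) * C := by
          gcongr with j
          rw [map_smul_eq_mul, Real.norm_eq_abs, abs_mul, Nat.abs_cast]
          gcongr
          exact hC j
      _ ≤ 2 ^ (k + 1) * √(k + 1 : ℕ) * C := by
          rw [← sum_mul]
          gcongr
          exact sum_range_choose_mul_abs_sub_two_mul_le (k + 1)
  have sqrt_pos : 0 < √(k + 1 : ℕ) := by positivity
  refine le_of_mul_le_mul_left (moment_bound.trans_eq ?_) (by positivity : (0 : ℝ) < (k + 1 : ℕ))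
  rw [div_mul_eq_mul_div, mul_div_assoc', eq_div_iff sqrt_pos.ne']
  linear_combination 2 ^ (k + 1) * C * Real.mul_self_sqrt (Nat.cast_nonneg (k + 1))

end Binomial

section Algebra

variable {Y : Type*} [AddCommGroup Y] [Module ℝ Y] {V : ℕ → ℝ}

theorem dd_one (g : ℕ → ℝ) : dd g 1 = g 1 := if_pos rfl

theorem dd_succ_of_ne_zero (g : ℕ → ℝ) {n : ℕ} (hn : n ≠ 0) :
    dd g (n + 1) = g (n + 1) - g n := by
  simp [dd, hn]

theorem sum_Icc_dd (g : ℕ → ℝ) {N : ℕ} (hN : 1 ≤ N) : ∑ n ∈ Icc 1 N, dd g n = g N := by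
  induction N, hN using Nat.le_induction with
  | base => simp [dd_one]
  | succ n hn ih =>
    rw [sum_Icc_succ_top (by lia), ih, dd_succ_of_ne_zero g (by lia), add_sub_cancel]

theorem wavg_zero_right (V : ℕ → ℝ) (f : ℕ → Y) : wavg V f 0 = 0 := by
  simp [wavg]

theorem wavg_succ (hV₀ : ∀ n ≠ 0, V n ≠ 0) (f : ℕ → Y) (n : ℕ) :
    wavg V f (n + 1) = (1 - dd V (n + 1) / V (n + 1)) • wavg V f n +
      (dd V (n + 1) / V (n + 1)) • f (n + 1) := by
  have coeff_smul_wavg : (1 - dd V (n + 1) / V (n + 1)) • wavg V f n =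
      (V (n + 1))⁻¹ • ∑ m ∈ Icc 1 n, dd V m • f m := by
    rcases eq_or_ne n 0 with rfl | hn
    · simp [wavg]
    · have hVn := hV₀ n hn
      have hVn' := hV₀ (n + 1) n.succ_ne_zero
      rw [wavg, smul_smul, dd_succ_of_ne_zero V hn]
      congr 1
      field_simp
      ring
  rw [coeff_smul_wavg, wavg, sum_Icc_succ_top (by lia), smul_add, smul_smul, div_eq_inv_mul]

/-- The averaging operator `f ↦ 𝔼^V f` on sequences, as a linear endomorphism, so that iterated
averages are its powers. -/
noncomputable def wavgEnd (Y : Type*) [AddCommGroup Y] [Module ℝ Y] (V : ℕ → ℝ) :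
    Module.End ℝ (ℕ → Y) where
  toFun f := wavg V f
  map_add' f g := by
    funext N
    simp only [wavg, Pi.add_apply, smul_add, sum_add_distrib]
  map_smul' c f := by
    funext N
    simp only [wavg, Pi.smul_apply, RingHom.id_apply, smul_comm _ c, ← smul_sum]

theorem wavgEnd_apply (V : ℕ → ℝ) (f : ℕ → Y) : wavgEnd Y V f = wavg V f := rfl

theorem iterAvg_eq_wavgEnd_pow (V : ℕ → ℝ) (f : ℕ → Y) (k : ℕ) :
    iterAvg V f k = (wavgEnd Y V ^ k) f := by
  induction k with
  | zero => rfl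
  | succ k ih =>
    rw [pow_succ', Module.End.mul_apply, ← ih]
    rfl

theorem wavgEnd_eq_one_sub_add (hV₀ : ∀ n ≠ 0, V n ≠ 0) (x : ℕ → Y) :
    wavgEnd Y V x = (1 - wavgEnd Y V) (fun N => ∑ n ∈ Icc 1 N, (dd V n / V n) • x n) +
      wavgEnd Y V (fun n => (dd V n / V n) • x n) := by
  set e : ℕ → Y := fun n => (dd V n / V n) • x n
  set S : ℕ → Y := fun N => ∑ n ∈ Icc 1 N, e n with hS
  have S_succ (n : ℕ) : S (n + 1) = S n + e (n + 1) := sum_Icc_succ_top (by lia) e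
  suffices wavg V x = S - wavg V (S - e) by
    simp only [← wavgEnd_apply, map_sub] at this
    rw [this, LinearMap.sub_apply, Module.End.one_apply]
    abel
  funext N
  induction N with
  | zero => simp [wavg_zero_right, hS]
  | succ n ih =>
    have shift : (S - e) (n + 1) = S n := by rw [Pi.sub_apply, S_succ, add_sub_cancel_right]
    rw [wavg_succ hV₀, ih, Pi.sub_apply, Pi.sub_apply, wavg_succ hV₀, shift, S_succ]
    module

end Algebra

section Estimates

variable {Y : Type*} [SeminormedAddCommGroup Y] [NormedSpace ℝ Y] {V : ℕ → ℝ}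

theorem pos_of_monotoneOn_Ici_one (hV₁ : 0 < V 1) (hV : MonotoneOn V (Set.Ici 1)) {n : ℕ}
    (hn : n ≠ 0) : 0 < V n :=
  have one_le : 1 ≤ n := Nat.one_le_iff_ne_zero.2 hn
  hV₁.trans_le (hV Set.self_mem_Ici one_le one_le)

theorem dd_succ_mem_Icc (hV₁ : 0 < V 1) (hV : MonotoneOn V (Set.Ici 1)) (n : ℕ) :
    dd V (n + 1) ∈ Set.Icc 0 (V (n + 1)) := by
  rcases eq_or_ne n 0 with rfl | hn
  · simpa [dd_one] using hV₁.le
  · have le_succ : V n ≤ V (n + 1) :=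
      hV (Nat.one_le_iff_ne_zero.2 hn) (Nat.le_add_left 1 n) n.le_succ
    have pos := pos_of_monotoneOn_Ici_one hV₁ hV hn
    rw [dd_succ_of_ne_zero V hn]
    constructor <;> linarith

-- `c = 0` says that averaging is a contraction; `c = 1` is the estimate `2 ‖A f‖ ≤ ‖(1 + A) f‖`.
theorem norm_wavg_le_of_norm_add_smul_wavg_le (hV₁ : 0 < V 1) (hV : MonotoneOn V (Set.Ici 1))
    {c M : ℝ} (hc : 0 ≤ c) {f : ℕ → Y} (hf : ∀ n, ‖f n + c • wavg V f n‖ ≤ (1 + c) * M) (n : ℕ) :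
    ‖wavg V f n‖ ≤ M := by
  induction n with
  | zero =>
    rw [wavg_zero_right, norm_zero]
    exact nonneg_of_mul_nonneg_right ((norm_nonneg _).trans (hf 0)) (by positivity)
  | succ n ih =>
    have V_pos {m : ℕ} (hm : m ≠ 0) : 0 < V m := pos_of_monotoneOn_Ici_one hV₁ hV hm
    obtain ⟨dd_nonneg, dd_le⟩ := dd_succ_mem_Icc hV₁ hV n
    have recurrence := wavg_succ (fun m hm => (V_pos hm).ne') f n
    set r := dd V (n + 1) / V (n + 1)
    have r_nonneg : 0 ≤ r := div_nonneg dd_nonneg (V_pos n.succ_ne_zero).le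
    have one_sub_r_nonneg : 0 ≤ 1 - r :=
      sub_nonneg.2 (div_le_one_of_le₀ dd_le (V_pos n.succ_ne_zero).le)
    have implicit_recurrence : (1 + c * r) • wavg V f (n + 1) =
        (1 - r) • wavg V f n + r • (f (n + 1) + c • wavg V f (n + 1)) := by
      linear_combination (norm := module) recurrence
    refine le_of_mul_le_mul_left ?_ (by positivity : 0 < 1 + c * r)
    calc (1 + c * r) * ‖wavg V f (n + 1)‖
        = ‖(1 - r) • wavg V f n + r • (f (n + 1) + c • wavg V f (n + 1))‖ := by
          rw [← implicit_recurrence, norm_smul, Real.norm_of_nonneg (by positivity)]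
      _ ≤ (1 - r) * ‖wavg V f n‖ + r * ‖f (n + 1) + c • wavg V f (n + 1)‖ := by
          refine (norm_add_le _ _).trans_eq ?_
          rw [norm_smul, norm_smul, Real.norm_of_nonneg r_nonneg,
            Real.norm_of_nonneg one_sub_r_nonneg]
      _ ≤ (1 - r) * M + r * ((1 + c) * M) := by
          gcongr
          exact hf (n + 1)
      _ = (1 + c * r) * M := by ring

theorem norm_wavgEnd_pow_le_of_norm_one_add_smul_pow_le (hV₁ : 0 < V 1)
    (hV : MonotoneOn V (Set.Ici 1)) {c : ℝ} (hc : 0 ≤ c) (k : ℕ) {M : ℝ} {f : ℕ → Y}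
    (hf : ∀ n, ‖((1 + c • wavgEnd Y V) ^ k) f n‖ ≤ (1 + c) ^ k * M) (n : ℕ) :
    ‖(wavgEnd Y V ^ k) f n‖ ≤ M := by
  set A := wavgEnd Y V
  induction k generalizing f M n with
  | zero => simpa using hf n
  | succ k ih =>
    have bound_after_k (m : ℕ) : ‖(A ^ k) ((1 + c • A) f) m‖ ≤ (1 + c) * M := by
      refine ih m (fun m => ?_)
      rw [← Module.End.mul_apply, ← pow_succ, ← mul_assoc, ← pow_succ]
      exact hf m
    have comm : A ^ k * (1 + c • A) = (1 + c • A) * A ^ k :=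
      ((Commute.one_right _).add_right ((Commute.pow_self A k).smul_right c)).eq
    rw [pow_succ', Module.End.mul_apply]
    refine norm_wavg_le_of_norm_add_smul_wavg_le hV₁ hV hc (fun m => ?_) n
    have h := bound_after_k m
    rwa [← Module.End.mul_apply, comm] at h

theorem norm_wavgEnd_pow_le (hV₁ : 0 < V 1) (hV : MonotoneOn V (Set.Ici 1)) {M : ℝ} {f : ℕ → Y}
    (hf : ∀ n, ‖f n‖ ≤ M) (k n : ℕ) : ‖(wavgEnd Y V ^ k) f n‖ ≤ M :=
  norm_wavgEnd_pow_le_of_norm_one_add_smul_pow_le hV₁ hV le_rfl k (by simpa using hf) n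

theorem norm_wavgEnd_pow_one_sub_le (hV₁ : 0 < V 1) (hV : MonotoneOn V (Set.Ici 1)) {B : ℝ}
    {S : ℕ → Y} (hS : ∀ n, ‖S n‖ ≤ B) (k n : ℕ) :
    ‖(wavgEnd Y V ^ k) ((1 - wavgEnd Y V) S) n‖ ≤ 2 * B / √(k + 1 : ℕ) := by
  refine norm_wavgEnd_pow_le_of_norm_one_add_smul_pow_le hV₁ hV zero_le_one k (fun m => ?_) n
  have h := seminorm_one_add_pow_mul_one_sub_le
    ((normSeminorm ℝ Y).comp (LinearMap.proj m : (ℕ → Y) →ₗ[ℝ] Y)) (wavgEnd Y V) S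
    (fun j => norm_wavgEnd_pow_le hV₁ hV hS j m) k
  rw [one_smul]
  refine h.trans_eq ?_
  ring

end Estimates

theorem sum_range_add_one_eq_sum_Icc {M : Type*} [AddCommMonoid M] (g : ℕ → M) (N : ℕ) :
    ∑ i ∈ range N, g (i + 1) = ∑ n ∈ Icc 1 N, g n := by
  rw [range_eq_Ico, sum_Ico_add' g 0 N 1]
  rfl

section Limits

variable {Y : Type*} [NormedAddCommGroup Y] [NormedSpace ℝ Y] {V : ℕ → ℝ}

theorem tendsto_wavg_zero (hV₁ : 0 < V 1) (hV : MonotoneOn V (Set.Ici 1))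
    (hVtop : Tendsto V atTop atTop) {e : ℕ → Y} (he : Tendsto e atTop (nhds 0)) :
    Tendsto (wavg V e) atTop (nhds 0) := by
  have sum_dd : (fun N => ∑ i ∈ range N, dd V (i + 1)) =ᶠ[atTop] V := by
    filter_upwards [eventually_ge_atTop 1] with N hN
    rw [sum_range_add_one_eq_sum_Icc, sum_Icc_dd V hN]
  have terms_isLittleO : (fun n => dd V (n + 1) • e (n + 1)) =o[atTop] fun n => dd V (n + 1) := by
    have he' := (Asymptotics.isLittleO_one_iff ℝ).2 (he.comp (tendsto_add_atTop_nat 1))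
    simpa using (Asymptotics.isBigO_refl (fun n => dd V (n + 1)) atTop).smul_isLittleO he'
  have sums_isLittleO := (terms_isLittleO.sum_range (fun n => (dd_succ_mem_Icc hV₁ hV n).1)
    (hVtop.congr' sum_dd.symm)).trans_eventuallyEq sum_dd
  refine sums_isLittleO.tendsto_inv_smul_nhds_zero.congr fun N => ?_
  rw [sum_range_add_one_eq_sum_Icc fun n => dd V n • e n, wavg]

theorem tendsto_wavgEnd_pow_zero (hV₁ : 0 < V 1) (hV : MonotoneOn V (Set.Ici 1))
    (hVtop : Tendsto V atTop atTop) {e : ℕ → Y} (he : Tendsto e atTop (nhds 0)) (k : ℕ) :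
    Tendsto ((wavgEnd Y V ^ k) e) atTop (nhds 0) := by
  induction k with
  | zero => simpa using he
  | succ k ih =>
    rw [pow_succ', Module.End.mul_apply]
    exact tendsto_wavg_zero hV₁ hV hVtop ih

theorem limsup_norm_iterAvg_succ_le (hV₁ : 0 < V 1) (hV : MonotoneOn V (Set.Ici 1))
    (hVtop : Tendsto V atTop atTop) {x : ℕ → Y} {B : ℝ}
    (hx : Tendsto (fun n => (dd V n / V n) • x n) atTop (nhds 0))
    (hB : ∀ N, ‖∑ n ∈ Icc 1 N, (dd V n / V n) • x n‖ ≤ B) (k : ℕ) :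
    limsup (fun N => ‖iterAvg V x (k + 1) N‖) atTop ≤ 2 * B / √(k + 1 : ℕ) := by
  set e : ℕ → Y := fun n => (dd V n / V n) • x n
  set S : ℕ → Y := fun N => ∑ n ∈ Icc 1 N, e n
  set A := wavgEnd Y V
  have decomposition : iterAvg V x (k + 1) = (A ^ k) ((1 - A) S) + (A ^ (k + 1)) e := by
    rw [iterAvg_eq_wavgEnd_pow, pow_succ, Module.End.mul_apply,
      wavgEnd_eq_one_sub_add (fun n hn => (pos_of_monotoneOn_Ici_one hV₁ hV hn).ne') x, map_add]
    rfl
  have norm_le (N : ℕ) :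
      ‖iterAvg V x (k + 1) N‖ ≤ 2 * B / √(k + 1 : ℕ) + ‖(A ^ (k + 1)) e N‖ := by
    rw [decomposition]
    exact norm_add_le_of_le (norm_wavgEnd_pow_one_sub_le hV₁ hV hB k N) le_rfl
  have tendsto_bound : Tendsto (fun N => 2 * B / √(k + 1 : ℕ) + ‖(A ^ (k + 1)) e N‖) atTop
      (nhds (2 * B / √(k + 1 : ℕ))) := by
    simpa using (tendsto_wavgEnd_pow_zero hV₁ hV hVtop hx (k + 1)).norm.const_add
      (2 * B / √(k + 1 : ℕ))
  rw [← tendsto_bound.limsup_eq]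
  exact limsup_le_limsup (.of_forall norm_le)
    (isCoboundedUnder_le_of_le atTop fun _ => norm_nonneg _) tendsto_bound.isBoundedUnder_le

end Limits

theorem stmt8_general {Y : Type*} [NormedAddCommGroup Y] [NormedSpace ℝ Y] {x : ℕ → Y} {V : ℕ → ℝ}
    (hV₁ : 0 < V 1) (hV : MonotoneOn V (Set.Ici 1)) (hVtop : Tendsto V atTop atTop)
    (hx : Tendsto (fun n => (dd V n / V n) • x n) atTop (nhds 0))
    (hbd : IsBoundedUnder (· ≤ ·) atTop fun N => ‖∑ n ∈ Icc 1 N, (dd V n / V n) • x n‖) :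
    iterInfty V x 0 := by
  obtain ⟨B, hB⟩ := hbd.bddAbove_range
  rw [mem_upperBounds, Set.forall_mem_range] at hB
  have tendsto_bound : Tendsto (fun k : ℕ => 2 * B / √(k + 1 : ℕ)) atTop (nhds 0) :=
    tendsto_const_nhds.div_atTop <| Real.tendsto_sqrt_atTop.comp <|
      tendsto_natCast_atTop_atTop.comp (tendsto_add_atTop_nat 1)
  simp only [iterInfty, sub_zero]
  refine squeeze_zero (fun k => ?_) (limsup_norm_iterAvg_succ_le hV₁ hV hVtop hx hB) tendsto_bound
  rw [limsup_eq]
  exact Real.sInf_nonneg fun a ha => (norm_nonneg _).trans ha.exists.choose_spec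

/-- if the partial sums `Σ_{n=1}^N (ΔV(n)/V(n))·x_n` have bounded norm
(i.e. their limsup is finite), then `𝔼(∞)^V x_n = 0`. -/
theorem stmt8 {Y : Type*} [NormedAddCommGroup Y] [NormedSpace ℝ Y] [CompleteSpace Y]
    (x : ℕ → Y) (hx : ∃ C : ℝ, ∀ n, ‖x n‖ ≤ C)
    (V : ℕ → ℝ)
    (hVpos : ∀ n : ℕ, 1 ≤ n → 0 < V n)
    (hVmono : ∀ m n : ℕ, 1 ≤ m → m < n → V m < V n)
    (hVtop : Tendsto V atTop atTop)
    (hV0 : Tendsto (fun N : ℕ => dd V N / V N) atTop (nhds 0))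
    (hbd : Filter.IsBoundedUnder (· ≤ ·) atTop
      (fun N : ℕ => ‖∑ n ∈ Finset.Icc 1 N, (dd V n / V n) • x n‖)) :
    iterInfty V x 0 := by
  have hx_bdd : IsBoundedUnder (· ≤ ·) atTop (norm ∘ x) := isBoundedUnder_of hx
  exact stmt8_general (hVpos 1 le_rfl) (StrictMonoOn.monotoneOn fun m hm n _ => hVmono m n hm)
    hVtop (hV0.zero_smul_isBoundedUnder_le hx_bdd) hbd
end
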